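/- Let X be a real Banach space and let C, D ⊆ X be nonempty convex sets such that C is weakly compact (compact in the weak topology of X) and D is simultaneously approximatively weakly compact. Then C + D is simultaneously approximatively weakly compact. -/

import Mathlib

/-!
Let `y n = c n + d n` be minimizing for `A` in `C + D`. A weak cluster point `c₀ ∈ C` of `c` is, by
Mazur's theorem, the norm limit of convex combinations `u n` of the tails of `c`. Let `v n` be the
combinations of the tails of `d` with the same coefficients. Since `simSup A` is convex,
`simSup A (u n + v n)` still tends to the distance, so `v` is minimizing for `A - c₀` in `D` and
subconverges weakly to some `d₀ ∈ D`. Hence `c₀ + d₀ ∈ C + D` lies in the closed convex hull of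
every tail of `y`.

The same holds for every subsequence of `y`, and this forces a weakly convergent subsequence, as in
the Eberlein–Šmulian theorem: the closed span of `y` is separable, so countably many functionals
separate its points, and along a subsequence on which all of them converge the closed convex hulls
of the tails have at most one point in common. That point is the weak limit.
-/

open Filter Topology Pointwise

variable {X : Type*} [NormedAddCommGroup X] [NormedSpace ℝ X]

/-- `simSup A y = sup_{a ∈ A} ‖a - y‖`. -/
noncomputable def simSup (A : Set X) (y : X) : ℝ := ⨆ a : A, ‖(a : X) - y‖

/-- `simDist A C = inf_{y ∈ C} sup_{a ∈ A} ‖a - y‖`. -/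
noncomputable def simDist (A C : Set X) : ℝ := ⨅ y : C, simSup A (y : X)

/-- The set of best simultaneous approximations `P_C(A)`. -/
def simBest (A C : Set X) : Set X := {y | y ∈ C ∧ simSup A y = simDist A C}

/-- The set `P_C(A, δ)`. -/
def simBestApprox (A C : Set X) (δ : ℝ) : Set X :=
  {y | y ∈ C ∧ simSup A y < simDist A C + δ}

/-- `C` is simultaneously proximinal. -/
def SimProximinal (C : Set X) : Prop :=
  ∀ A : Set X, A.Nonempty → Bornology.IsBounded A → (simBest A C).Nonempty

/-- `y` is a minimizing sequence in `C` for `A`. -/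
def IsMinimizing (A C : Set X) (y : ℕ → X) : Prop :=
  (∀ n, y n ∈ C) ∧ Tendsto (fun n => simSup A (y n)) atTop (𝓝 (simDist A C))

/-- Weak convergence of a sequence. -/
def WeakTendsto (y : ℕ → X) (c : X) : Prop :=
  ∀ f : X →L[ℝ] ℝ, Tendsto (fun n => f (y n)) atTop (𝓝 (f c))

/-- `C` is simultaneously approximatively compact. -/
def SimApproxCompact (C : Set X) : Prop :=
  ∀ A : Set X, A.Nonempty → Bornology.IsBounded A → ∀ y : ℕ → X, IsMinimizing A C y →
    ∃ c ∈ C, ∃ φ : ℕ → ℕ, StrictMono φ ∧ Tendsto (y ∘ φ) atTop (𝓝 c)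

/-- `C` is simultaneously approximatively weakly compact. -/
def SimApproxWeakCompact (C : Set X) : Prop :=
  ∀ A : Set X, A.Nonempty → Bornology.IsBounded A → ∀ y : ℕ → X, IsMinimizing A C y →
    ∃ c ∈ C, ∃ φ : ℕ → ℕ, StrictMono φ ∧ WeakTendsto (y ∘ φ) c

/-- `C` is simultaneously strongly proximinal. -/
def SimStronglyProximinal (C : Set X) : Prop :=
  SimProximinal C ∧ ∀ A : Set X, A.Nonempty → Bornology.IsBounded A → ∀ ε > (0 : ℝ),
    ∃ δ > (0 : ℝ), simBestApprox A C δ ⊆ simBest A C + Metric.closedBall (0 : X) ε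

/-- `C` is simultaneously weakly strongly proximinal. -/
def SimWeakStronglyProximinal (C : Set X) : Prop :=
  SimProximinal C ∧ ∀ A : Set X, A.Nonempty → Bornology.IsBounded A →
    ∀ V : Set X, V ∈ 𝓝 (0 : WeakSpace ℝ X) → ∃ δ > (0 : ℝ),
      simBestApprox A C δ ⊆ simBest A C + V

section TailCombination

variable {E F : Type*} [AddCommGroup E] [Module ℝ E] [AddCommGroup F] [Module ℝ F]

/-- `p` is a sequence of convex combinations of the tails of `x`: the `n`-th term combines terms
of `x` of index at least `n`. -/
def IsTailCombination (p x : ℕ → E) : Prop :=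
  ∀ n, p n ∈ convexHull ℝ (x '' Set.Ici n)

namespace IsTailCombination

lemma comp_strictMono (x : ℕ → E) {φ : ℕ → ℕ} (hφ : StrictMono φ) :
    IsTailCombination (x ∘ φ) x :=
  fun _ => subset_convexHull ℝ _ (Set.mem_image_of_mem x hφ.le_apply)

variable {p x : ℕ → E}

lemma map (hp : IsTailCombination p x) (L : E →ₗ[ℝ] F) :
    IsTailCombination (L ∘ p) (L ∘ x) := fun n => by
  rw [Set.image_comp, ← L.image_convexHull]
  exact Set.mem_image_of_mem L (hp n)

lemma forall_mem (hp : IsTailCombination p x) {K : Set E} (hK : Convex ℝ K)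
    (hx : ∀ n, x n ∈ K) (n : ℕ) : p n ∈ K :=
  convexHull_min (Set.image_subset_iff.2 fun k _ => hx k) hK (hp n)

lemma eventually_mem (hp : IsTailCombination p x) {K : Set E} (hK : Convex ℝ K)
    (hx : ∀ᶠ n in atTop, x n ∈ K) : ∀ᶠ n in atTop, p n ∈ K := by
  obtain ⟨N, hN⟩ := eventually_atTop.1 hx
  filter_upwards [eventually_ge_atTop N] with n hn
  exact convexHull_min (Set.image_subset_iff.2 fun k hk => hN k (hn.trans hk)) hK (hp n)

end IsTailCombination

end TailCombination

section TailHull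

variable {E : Type*} [AddCommGroup E] [Module ℝ E] [TopologicalSpace E]

/-- The intersection of the closed convex hulls of the tails of `x`. It serves as a convex
substitute for the set of weak cluster points of `x`: it contains them all, and a functional that
converges along `x` takes the limit as its value at every point of it. -/
def tailHull (x : ℕ → E) : Set E :=
  ⋂ n, closedConvexHull ℝ (x '' Set.Ici n)

lemma mem_tailHull_iff {x : ℕ → E} {z : E} :
    z ∈ tailHull x ↔
      ∀ K : Set E, Convex ℝ K → IsClosed K → (∀ᶠ n in atTop, x n ∈ K) → z ∈ K := by
  refine ⟨fun hz K hK hKcl hx => ?_, fun h => Set.mem_iInter.2 fun n => ?_⟩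
  · obtain ⟨N, hN⟩ := eventually_atTop.1 hx
    exact closedConvexHull_min (Set.image_subset_iff.2 hN) hK hKcl (Set.mem_iInter.1 hz N)
  · refine h _ convex_closedConvexHull isClosed_closedConvexHull ?_
    filter_upwards [eventually_ge_atTop n] with k hk
    exact subset_closedConvexHull (Set.mem_image_of_mem x hk)

lemma IsTailCombination.tailHull_subset {p x : ℕ → E} (hp : IsTailCombination p x) :
    tailHull p ⊆ tailHull x := fun _ hz =>
  mem_tailHull_iff.2 fun K hK hKcl hx => mem_tailHull_iff.1 hz K hK hKcl (hp.eventually_mem hK hx)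

lemma tailHull_comp_subset (x : ℕ → E) {φ : ℕ → ℕ} (hφ : StrictMono φ) :
    tailHull (x ∘ φ) ⊆ tailHull x :=
  (IsTailCombination.comp_strictMono x hφ).tailHull_subset

lemma apply_eq_of_mem_tailHull {x : ℕ → E} {z : E} (hz : z ∈ tailHull x) (f : E →L[ℝ] ℝ) {α : ℝ}
    (hf : Tendsto (fun n => f (x n)) atTop (𝓝 α)) : f z = α :=
  eq_of_forall_dist_le fun ε hε => mem_tailHull_iff.1 hz (f ⁻¹' Metric.closedBall α ε)
    ((convex_closedBall α ε).linear_preimage f.toLinearMap)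
    (Metric.isClosed_closedBall.preimage f.continuous)
    (hf (Metric.closedBall_mem_nhds α hε))

variable [IsTopologicalAddGroup E] [ContinuousSMul ℝ E]

lemma tailHull_subset_topologicalClosure_span (x : ℕ → E) :
    tailHull x ⊆ (Submodule.span ℝ (Set.range x)).topologicalClosure := fun _ hz =>
  mem_tailHull_iff.1 hz _ (Submodule.convex _) (Submodule.isClosed_topologicalClosure _) <|
    Eventually.of_forall fun n =>
      Submodule.le_topologicalClosure _ (Submodule.subset_span (Set.mem_range_self n))

lemma mem_tailHull_of_mapClusterPt_toWeakSpace [LocallyConvexSpace ℝ E] {x : ℕ → E} {z : E}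
    (hz : MapClusterPt (toWeakSpace ℝ E z) atTop (toWeakSpace ℝ E ∘ x)) : z ∈ tailHull x := by
  refine mem_tailHull_iff.2 fun K hK hKcl hx => ?_
  have hKweak : IsClosed (toWeakSpace ℝ E '' K) := by
    rw [← closure_eq_iff_isClosed, ← hK.toWeakSpace_closure ℝ, hKcl.closure_eq]
  exact (toWeakSpace ℝ E).injective.mem_set_image.1 <|
    hKweak.mem_of_mapClusterPt hz (hx.mono fun _ hn => Set.mem_image_of_mem _ hn)

end TailHull

/-- Forming the combinations in the product gives `c` and `d` the same coefficients. -/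
lemma exists_isTailCombination_prod {E F : Type*} [SeminormedAddCommGroup E] [NormedSpace ℝ E]
    [AddCommGroup F] [Module ℝ F] {c : ℕ → E} {z : E} (hz : z ∈ tailHull c) (d : ℕ → F) :
    ∃ p : ℕ → E × F, IsTailCombination p (fun n => (c n, d n)) ∧
      Tendsto (fun n => (p n).1) atTop (𝓝 z) := by
  have happrox (n : ℕ) : ∃ p ∈ convexHull ℝ ((fun k => (c k, d k)) '' Set.Ici n),
      dist p.1 z < 1 / ((n : ℝ) + 1) := by
    have hzn : z ∈ closure (LinearMap.fst ℝ E F ''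
        convexHull ℝ ((fun k => (c k, d k)) '' Set.Ici n)) := by
      rw [LinearMap.image_convexHull, Set.image_image, ← closedConvexHull_eq_closure_convexHull]
      exact Set.mem_iInter.1 hz n
    obtain ⟨_, ⟨p, hp, rfl⟩, hpz⟩ := Metric.mem_closure_iff.1 hzn _ Nat.one_div_pos_of_nat
    exact ⟨p, hp, by rwa [dist_comm]⟩
  choose p hp hpz using happrox
  exact ⟨p, hp, tendsto_iff_dist_tendsto_zero.2 <|
    squeeze_zero (fun _ => dist_nonneg) (fun n => (hpz n).le)
      tendsto_one_div_add_atTop_nhds_zero_nat⟩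

lemma exists_strictMono_forall_tendsto {ι α : Type*} [Countable ι] [PseudoMetricSpace α]
    [ProperSpace α] {u : ι → ℕ → α} (hu : ∀ i, Bornology.IsBounded (Set.range (u i))) :
    ∃ φ : ℕ → ℕ, StrictMono φ ∧ ∀ i, ∃ a, Tendsto (u i ∘ φ) atTop (𝓝 a) := by
  obtain ⟨a, -, φ, hφ, ha⟩ :=
    (isCompact_univ_pi fun i => (hu i).isCompact_closure).tendsto_subseq
      (x := fun n i => u i n) (fun n i _ => subset_closure (Set.mem_range_self n))
  exact ⟨φ, hφ, fun i => ⟨a i, tendsto_pi_nhds.1 ha i⟩⟩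

lemma exists_countable_separating_of_isSeparable (𝕜 : Type*) {E : Type*} [RCLike 𝕜]
    [NormedAddCommGroup E] [NormedSpace 𝕜 E] {S : Set E} (hS : TopologicalSpace.IsSeparable S) :
    ∃ G : Set (StrongDual 𝕜 E), G.Countable ∧ ∀ v ∈ S, (∀ g ∈ G, g v = 0) → v = 0 := by
  obtain ⟨c, hc, hSc⟩ := hS
  choose g hg_norm hg_apply using exists_dual_vector'' 𝕜 (E := E)
  refine ⟨g '' c, hc.image g, fun v hv hgv => ?_⟩
  by_contra hv0
  obtain ⟨s, hs, hvs⟩ := Metric.mem_closure_iff.1 (hSc hv) (‖v‖ / 2) (half_pos (norm_pos_iff.2 hv0))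
  -- The norming functional of `s` vanishes at `v`, so `s` is no closer to `v` than to `0`.
  have hs_le : ‖s‖ ≤ ‖v - s‖ := by
    have hgs : g s (v - s) = -(‖s‖ : 𝕜) := by
      rw [map_sub, hgv _ (Set.mem_image_of_mem g hs), hg_apply, zero_sub]
    simpa [hgs] using (g s).le_of_opNorm_le (hg_norm s) (v - s)
  rw [dist_eq_norm] at hvs
  linarith [norm_le_norm_sub_add v s]

lemma isBounded_range_apply {F : Type*} [SeminormedAddCommGroup F] [NormedSpace ℝ F] {y : ℕ → X}
    (hy : Bornology.IsBounded (Set.range y)) (f : X →L[ℝ] F) :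
    Bornology.IsBounded (Set.range fun n => f (y n)) := by
  rw [← Function.comp_def, Set.range_comp]
  exact f.lipschitz.isBounded_image hy

lemma exists_strictMono_tailHull_subsingleton {y : ℕ → X}
    (hy : Bornology.IsBounded (Set.range y)) :
    ∃ φ : ℕ → ℕ, StrictMono φ ∧ (tailHull (y ∘ φ)).Subsingleton := by
  set V := (Submodule.span ℝ (Set.range y)).topologicalClosure
  have hVsep : TopologicalSpace.IsSeparable (V : Set X) :=
    (Set.countable_range y).isSeparable.span.closure
  obtain ⟨G, hG, hGsep⟩ := exists_countable_separating_of_isSeparable ℝ hVsep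
  have := hG.to_subtype
  obtain ⟨φ, hφ, hconv⟩ := exists_strictMono_forall_tendsto
    (u := fun (g : G) n => g.1 (y n)) fun g => isBounded_range_apply hy g.1
  have hsub : tailHull (y ∘ φ) ⊆ V :=
    (tailHull_comp_subset y hφ).trans (tailHull_subset_topologicalClosure_span y)
  refine ⟨φ, hφ, fun z hz w hw => sub_eq_zero.1 ?_⟩
  refine hGsep _ (V.sub_mem (hsub hz) (hsub hw)) fun g hg => ?_
  obtain ⟨a, ha⟩ := hconv ⟨g, hg⟩
  rw [map_sub, apply_eq_of_mem_tailHull hz g ha, apply_eq_of_mem_tailHull hw g ha, sub_self]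

lemma weakTendsto_of_tailHull_subset_singleton {y : ℕ → X} {z : X}
    (hy : Bornology.IsBounded (Set.range y)) (hz : tailHull y ⊆ {z})
    (hne : ∀ φ : ℕ → ℕ, StrictMono φ → (tailHull (y ∘ φ)).Nonempty) : WeakTendsto y z := by
  refine fun f => tendsto_of_subseq_tendsto fun ns hns => ?_
  obtain ⟨ρ, -, hρ⟩ := strictMono_subseq_of_tendsto_atTop hns
  obtain ⟨a, -, τ, hτ, ha⟩ := tendsto_subseq_of_bounded (isBounded_range_apply hy f)
    (x := fun n => f (y (ns (ρ n)))) fun n => Set.mem_range_self _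
  have hφ : StrictMono (ns ∘ ρ ∘ τ) := hρ.comp hτ
  obtain ⟨w, hw⟩ := hne _ hφ
  obtain rfl : w = z := hz (tailHull_comp_subset y hφ hw)
  exact ⟨ρ ∘ τ, by rwa [apply_eq_of_mem_tailHull hw f ha]⟩

lemma exists_strictMono_weakTendsto {y : ℕ → X} {S : Set X}
    (hy : Bornology.IsBounded (Set.range y))
    (hS : ∀ φ : ℕ → ℕ, StrictMono φ → (S ∩ tailHull (y ∘ φ)).Nonempty) :
    ∃ z ∈ S, ∃ φ : ℕ → ℕ, StrictMono φ ∧ WeakTendsto (y ∘ φ) z := by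
  obtain ⟨φ, hφ, hsub⟩ := exists_strictMono_tailHull_subsingleton hy
  obtain ⟨z, hzS, hz⟩ := hS φ hφ
  refine ⟨z, hzS, φ, hφ, weakTendsto_of_tailHull_subset_singleton
    (hy.subset (Set.range_comp_subset_range φ y)) (fun w hw => hsub hw hz) fun ψ hψ => ?_⟩
  exact (hS (φ ∘ ψ) (hφ.comp hψ)).right

lemma WeakTendsto.mem_tailHull {y : ℕ → X} {z : X} (h : WeakTendsto y z) : z ∈ tailHull y := by
  have hinj : Function.Injective (topDualPairing ℝ X).flip := fun a b hab =>
    SeparatingDual.eq_iff_forall_dual_eq.2 (LinearMap.congr_fun hab)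
  exact mem_tailHull_of_mapClusterPt_toWeakSpace <| Tendsto.mapClusterPt <|
    (WeakBilin.tendsto_iff_forall_eval_tendsto _ hinj).2 h

lemma WeakTendsto.add {x y : ℕ → X} {a b : X} (hx : WeakTendsto x a) (hy : WeakTendsto y b) :
    WeakTendsto (x + y) (a + b) := fun f => by
  simpa only [Pi.add_apply, map_add] using (hx f).add (hy f)

lemma inter_tailHull_nonempty_of_isCompact_weakSpace {E : Type*} [AddCommGroup E] [Module ℝ E]
    [TopologicalSpace E] [IsTopologicalAddGroup E] [ContinuousSMul ℝ E] [LocallyConvexSpace ℝ E]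
    {C : Set E} (hC : IsCompact (show Set (WeakSpace ℝ E) from C)) {c : ℕ → E}
    (hc : ∀ n, c n ∈ C) : (C ∩ tailHull c).Nonempty := by
  obtain ⟨z, hz, hcz⟩ := hC.exists_mapClusterPt_of_frequently (l := atTop)
    (f := toWeakSpace ℝ E ∘ c) (Frequently.of_forall hc)
  exact ⟨z, hz, mem_tailHull_of_mapClusterPt_toWeakSpace hcz⟩

section SimSup

variable {E : Type*} [NormedAddCommGroup E] {A C D : Set E}

lemma bddAbove_range_norm_sub (hA : Bornology.IsBounded A) (y : E) :
    BddAbove (Set.range fun a : A => ‖(a : E) - y‖) := by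
  obtain ⟨M, hM⟩ := hA.exists_norm_le
  refine ⟨M + ‖y‖, Set.forall_mem_range.2 fun a => ?_⟩
  exact (norm_sub_le _ _).trans (add_le_add_left (hM a a.2) _)

lemma norm_sub_le_simSup (hA : Bornology.IsBounded A) {a : E} (ha : a ∈ A) (y : E) :
    ‖a - y‖ ≤ simSup A y :=
  le_ciSup (bddAbove_range_norm_sub hA y) (⟨a, ha⟩ : A)

lemma simSup_le (hne : A.Nonempty) {y : E} {r : ℝ} (h : ∀ a ∈ A, ‖a - y‖ ≤ r) :
    simSup A y ≤ r :=
  have := hne.to_subtype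
  ciSup_le fun a => h a a.2

lemma simSup_nonneg (A : Set E) (y : E) : 0 ≤ simSup A y :=
  Real.iSup_nonneg fun _ => norm_nonneg _

lemma simSup_le_simSup_add_norm_sub (hne : A.Nonempty) (hA : Bornology.IsBounded A) (x y : E) :
    simSup A x ≤ simSup A y + ‖y - x‖ :=
  simSup_le hne fun a ha => (norm_sub_le_norm_sub_add_norm_sub a y x).trans <| by
    gcongr
    exact norm_sub_le_simSup hA ha y

lemma simSup_neg_vadd (A : Set E) (c y : E) : simSup (-c +ᵥ A) y = simSup A (c + y) := by
  rw [simSup, simSup, ← sSup_image' (f := fun a => ‖a - y‖),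
    ← sSup_image' (f := fun a => ‖a - (c + y)‖), ← Set.image_vadd, Set.image_image]
  simp only [vadd_eq_add, neg_add_eq_sub, sub_sub]

lemma simDist_le (A : Set E) {y : E} (hy : y ∈ C) : simDist A C ≤ simSup A y :=
  ciInf_le (f := fun y : C => simSup A y)
    ⟨0, Set.forall_mem_range.2 fun z => simSup_nonneg A z⟩ ⟨y, hy⟩

lemma isMinimizing_of_tendsto {y : ℕ → E} {r : ℝ} (hyC : ∀ n, y n ∈ C)
    (hy : Tendsto (fun n => simSup A (y n)) atTop (𝓝 r)) (hr : ∀ x ∈ C, r ≤ simSup A x) :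
    IsMinimizing A C y := by
  have : Nonempty C := ⟨⟨y 0, hyC 0⟩⟩
  have hdist : simDist A C = r :=
    le_antisymm (ge_of_tendsto' hy fun n => simDist_le A (hyC n)) (le_ciInf fun x => hr x x.2)
  exact ⟨hyC, hdist ▸ hy⟩

namespace IsMinimizing

variable {y : ℕ → E}

lemma comp_strictMono (hy : IsMinimizing A C y) {φ : ℕ → ℕ} (hφ : StrictMono φ) :
    IsMinimizing A C (y ∘ φ) :=
  ⟨fun n => hy.1 (φ n), hy.2.comp hφ.tendsto_atTop⟩

lemma isBounded_range (hne : A.Nonempty) (hA : Bornology.IsBounded A)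
    (hy : IsMinimizing A C y) : Bornology.IsBounded (Set.range y) := by
  obtain ⟨a, ha⟩ := hne
  obtain ⟨B, hB⟩ := hy.2.bddAbove_range
  refine (Metric.isBounded_closedBall (x := a) (r := B)).subset (Set.range_subset_iff.2 fun n => ?_)
  rw [mem_closedBall_iff_norm']
  exact (norm_sub_le_simSup hA ha (y n)).trans (hB (Set.mem_range_self n))

end IsMinimizing

lemma isMinimizing_neg_vadd (hne : A.Nonempty) (hA : Bornology.IsBounded A) {c : E} (hc : c ∈ C)
    {u v : ℕ → E} (hu : Tendsto u atTop (𝓝 c)) (hv : ∀ n, v n ∈ D)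
    (huv : ∀ r > simDist A (C + D), ∀ᶠ n in atTop, simSup A (u n + v n) < r) :
    IsMinimizing (-c +ᵥ A) D v := by
  have hlower : ∀ x ∈ D, simDist A (C + D) ≤ simSup (-c +ᵥ A) x := fun x hx => by
    rw [simSup_neg_vadd]
    exact simDist_le A (Set.add_mem_add hc hx)
  have hupper (n : ℕ) : simSup (-c +ᵥ A) (v n) ≤ simSup A (u n + v n) + ‖u n - c‖ := by
    simpa only [simSup_neg_vadd, add_sub_add_right_eq_sub] using
      simSup_le_simSup_add_norm_sub hne hA (c + v n) (u n + v n)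
  refine isMinimizing_of_tendsto hv (tendsto_order.2 ⟨fun r hr => ?_, fun r hr => ?_⟩) hlower
  · exact Eventually.of_forall fun n => hr.trans_le (hlower _ (hv n))
  · obtain ⟨s, hRs, hsr⟩ := exists_between hr
    filter_upwards [huv s hRs, (tendsto_iff_norm_sub_tendsto_zero.1 hu).eventually_lt_const
      (sub_pos.2 hsr)] with n hsum hnorm
    linarith [hupper n]

end SimSup

section Sum

variable {A C D : Set X}

lemma convexOn_simSup (hne : A.Nonempty) (hA : Bornology.IsBounded A) :
    ConvexOn ℝ Set.univ (simSup A) := by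
  refine ⟨convex_univ, fun x _ y _ s t hs ht hst => simSup_le hne fun a ha => ?_⟩
  calc ‖a - (s • x + t • y)‖ = ‖s • (a - x) + t • (a - y)‖ := by
        rw [smul_sub, smul_sub, sub_add_sub_comm, ← add_smul, hst, one_smul]
    _ ≤ ‖s • (a - x)‖ + ‖t • (a - y)‖ := norm_add_le _ _
    _ = s * ‖a - x‖ + t * ‖a - y‖ := by
        rw [norm_smul_of_nonneg hs, norm_smul_of_nonneg ht]
    _ ≤ s * simSup A x + t * simSup A y := by
        gcongr <;> exact norm_sub_le_simSup hA ha _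

lemma IsTailCombination.eventually_simSup_lt (hne : A.Nonempty) (hA : Bornology.IsBounded A)
    {p y : ℕ → X} (hp : IsTailCombination p y) {R r : ℝ}
    (hy : Tendsto (fun n => simSup A (y n)) atTop (𝓝 R)) (hr : R < r) :
    ∀ᶠ n in atTop, simSup A (p n) < r := by
  have hconv : Convex ℝ {x | simSup A x < r} := by
    simpa only [Set.mem_univ, true_and] using (convexOn_simSup hne hA).convex_lt r
  exact hp.eventually_mem hconv (hy.eventually_lt_const hr)

lemma IsMinimizing.inter_tailHull_nonempty (hne : A.Nonempty) (hA : Bornology.IsBounded A)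
    (hDc : Convex ℝ D) (hC : IsCompact (show Set (WeakSpace ℝ X) from C))
    (hD : SimApproxWeakCompact D) {y : ℕ → X} (hy : IsMinimizing A (C + D) y) :
    ((C + D) ∩ tailHull y).Nonempty := by
  choose c hc d hd hcd using fun n => Set.mem_add.1 (hy.1 n)
  obtain ⟨c₀, hc₀, hcl⟩ := inter_tailHull_nonempty_of_isCompact_weakSpace hC hc
  obtain ⟨p, hp, hp_fst⟩ := exists_isTailCombination_prod hcl d
  have hp_snd : ∀ n, (p n).2 ∈ D := (hp.map (LinearMap.snd ℝ X X)).forall_mem hDc hd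
  have hp_add : IsTailCombination (fun n => (p n).1 + (p n).2) y := by
    simpa only [Function.comp_def, LinearMap.add_apply, LinearMap.fst_apply, LinearMap.snd_apply,
      hcd] using hp.map (LinearMap.fst ℝ X X + LinearMap.snd ℝ X X)
  have hmin : IsMinimizing (-c₀ +ᵥ A) D (fun n => (p n).2) :=
    isMinimizing_neg_vadd hne hA hc₀ hp_fst hp_snd fun r hr =>
      hp_add.eventually_simSup_lt hne hA hy.2 hr
  obtain ⟨d₀, hd₀, φ, hφ, hweak⟩ := hD _ hne.vadd_set (hA.vadd (-c₀)) _ hmin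
  have hweak_fst : WeakTendsto (fun n => (p (φ n)).1) c₀ := fun f =>
    (f.continuous.tendsto c₀).comp (hp_fst.comp hφ.tendsto_atTop)
  exact ⟨c₀ + d₀, Set.add_mem_add hc₀ hd₀, hp_add.tailHull_subset <|
    tailHull_comp_subset _ hφ (hweak_fst.add hweak).mem_tailHull⟩

end Sum

theorem weaklyCompact_add_simApproxWeakCompact_general (C D : Set X) (hDc : Convex ℝ D)
    (hC : IsCompact (show Set (WeakSpace ℝ X) from C)) (hD : SimApproxWeakCompact D) :
    SimApproxWeakCompact (C + D) := fun _ hne hA _ hy =>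
  exists_strictMono_weakTendsto (hy.isBounded_range hne hA) fun _ hφ =>
    (hy.comp_strictMono hφ).inter_tailHull_nonempty hne hA hDc hC hD

/-- The sum of a weakly compact convex set and a simultaneously approximatively weakly compact
convex set is simultaneously approximatively weakly compact. -/
theorem weaklyCompact_add_simApproxWeakCompact [CompleteSpace X]
    (C D : Set X) (hCne : C.Nonempty) (hDne : D.Nonempty)
    (hCc : Convex ℝ C) (hDc : Convex ℝ D)
    (hC : IsCompact (show Set (WeakSpace ℝ X) from C))
    (hD : SimApproxWeakCompact D) :
    SimApproxWeakCompact (C + D) :=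
  weaklyCompact_add_simApproxWeakCompact_general C D hDc hC hD
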